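/- arXiv:quant-ph/0407227 — 2 statements merged into one kernel-verified Lean document; each statement's English description precedes it below -/
import Mathlib

section
/- Han–Zhang–Guo inequalities (necessity): let Ψ be a unit vector in (ℂ^m)^{⊗n} (a pure state of n particles each with an m-dimensional state space), with one-particle reduced density matrices ρ_1, …, ρ_n, and for each a let λ_1^{(a)} ≤ λ_2^{(a)} ≤ ⋯ ≤ λ_m^{(a)} be the eigenvalues of ρ_a in ascending order. Then for every pair of distinct indices a, b and every p ∈ {1, …, m−1}: Σ_{i=1}^p λ_i^{(a)} ≤ Σ_{i=1}^p λ_i^{(b)} + Σ_{c ≠ a,b} Σ_{i=1}^{m−1} λ_i^{(c)}. -/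
open scoped Matrix ComplexOrder

/-- The one-particle reduced density matrix at site `a` of a vector
`Ψ ∈ (ℂᵐ)^{⊗n}`: `ρ_a[s,t] = Σ Ψ_x conj(Ψ_y)`, the sum over pairs `x, y` with
`x_a = s`, `y_a = t` and `x_j = y_j` for `j ≠ a`. -/
noncomputable def siteReduced {m n : ℕ} (a : Fin n) (Ψ : (Fin n → Fin m) → ℂ) :
    Matrix (Fin m) (Fin m) ℂ :=
  Matrix.of fun s t =>
    ∑ x ∈ Finset.univ.filter (fun x : Fin n → Fin m => x a = s),
      Ψ x * (starRingEnd ℂ) (Ψ (Function.update x a t))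

theorem exists_lower {m : ℕ} (M : Matrix (Fin m) (Fin m) ℂ) :
    ∃ V : Matrix (Fin m) (Fin m) ℂ, Vᴴ * V = 1 ∧ V * Vᴴ = 1 ∧ ∀ k j, k < j → (V * M) k j = 0 := by
  let f : Fin m → EuclideanSpace ℂ (Fin m) := fun i => WithLp.toLp 2 (fun s => M s (Fin.rev i))
  have hd : Module.finrank ℂ (EuclideanSpace ℂ (Fin m)) = Fintype.card (Fin m) := by simp
  let b := InnerProductSpace.gramSchmidtOrthonormalBasis hd f
  let V : Matrix (Fin m) (Fin m) ℂ := Matrix.of fun k s => (starRingEnd ℂ) (b (Fin.rev k) s)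
  have h2 : V * Vᴴ = 1 := by
    ext i j
    have := orthonormal_iff_ite.mp b.orthonormal (Fin.rev i) (Fin.rev j)
    rw [PiLp.inner_apply] at this
    simp only [Matrix.mul_apply, V, Matrix.conjTranspose_apply, Matrix.of_apply, Matrix.one_apply]
    simp only [RCLike.inner_apply, Fin.rev_inj] at this
    rw [← this]
    refine Finset.sum_congr rfl fun s _ => ?_
    simp [mul_comm]
  refine ⟨V, mul_eq_one_comm.mp h2, h2, fun k j hkj => ?_⟩
  have := InnerProductSpace.gramSchmidtOrthonormalBasis_inv_triangular hd f
    (i := Fin.rev j) (j := Fin.rev k) (by simpa using hkj)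
  rw [PiLp.inner_apply] at this
  rw [← this, Matrix.mul_apply]
  refine Finset.sum_congr rfl fun s _ => ?_
  simp [V, f, b, mul_comm]

/-- apply a matrix at one site -/
noncomputable def siteApply {m n : ℕ} (c : Fin n) (V : Matrix (Fin m) (Fin m) ℂ)
    (Φ : (Fin n → Fin m) → ℂ) : (Fin n → Fin m) → ℂ :=
  fun x => ∑ s, V (x c) s * Φ (Function.update x c s)

/-- configuration with value `s` at `c` and `r` elsewhere -/
def glue {m n : ℕ} (c : Fin n) (s : Fin m) (r : {j : Fin n // j ≠ c} → Fin m) : Fin n → Fin m :=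
  (Equiv.funSplitAt c (Fin m)).symm (s, r)

theorem glue_self {m n : ℕ} (c : Fin n) (s : Fin m) (r : {j : Fin n // j ≠ c} → Fin m) :
    glue c s r c = s := by
  simp [glue]

theorem update_glue {m n : ℕ} (c : Fin n) (s t : Fin m) (r : {j : Fin n // j ≠ c} → Fin m) :
    Function.update (glue c s r) c t = glue c t r := by
  ext j
  by_cases h : j = c
  · subst h; simp [glue_self]
  · simp [glue, h]

theorem sum_glue {m n : ℕ} (c : Fin n) (f : (Fin n → Fin m) → ℂ) :
    ∑ x, f x = ∑ s, ∑ r, f (glue c s r) := by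
  rw [← Fintype.sum_prod_type', ← (Equiv.funSplitAt c (Fin m)).symm.sum_comp]
  rfl

/-- flattening -/
def flat {m n : ℕ} (c : Fin n) (Φ : (Fin n → Fin m) → ℂ) :
    Matrix (Fin m) ({j : Fin n // j ≠ c} → Fin m) ℂ := Matrix.of fun s r => Φ (glue c s r)

theorem flat_siteApply {m n : ℕ} (c : Fin n) (V : Matrix (Fin m) (Fin m) ℂ)
    (Φ : (Fin n → Fin m) → ℂ) : flat c (siteApply c V Φ) = V * flat c Φ := by
  ext s r
  simp [flat, siteApply, Matrix.mul_apply, glue_self, update_glue]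

theorem siteReduced_eq_flat {m n : ℕ} (c : Fin n) (Φ : (Fin n → Fin m) → ℂ) :
    siteReduced c Φ = flat c Φ * (flat c Φ)ᴴ := by
  ext s t
  simp only [siteReduced, Matrix.of_apply, Finset.sum_filter, Matrix.mul_apply]
  rw [sum_glue c, Finset.sum_eq_single s]
  · simp [glue_self, update_glue, flat]
  · intro u _ hu
    simp [glue_self, hu]
  · simp

theorem siteReduced_siteApply_self {m n : ℕ} (c : Fin n) (V : Matrix (Fin m) (Fin m) ℂ)
    (Φ : (Fin n → Fin m) → ℂ) :
    siteReduced c (siteApply c V Φ) = V * siteReduced c Φ * Vᴴ := by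
  simp only [siteReduced_eq_flat, flat_siteApply, Matrix.conjTranspose_mul, Matrix.mul_assoc]

theorem siteApply_isometry {m n : ℕ} (c : Fin n) (V : Matrix (Fin m) (Fin m) ℂ)
    (hV : Vᴴ * V = 1) (Φ Ψ : (Fin n → Fin m) → ℂ) :
    ∑ x, siteApply c V Φ x * (starRingEnd ℂ) (siteApply c V Ψ x)
      = ∑ x, Φ x * (starRingEnd ℂ) (Ψ x) := by
  have key : ∀ A B : (Fin n → Fin m) → ℂ, ∑ x, A x * (starRingEnd ℂ) (B x)
      = (flat c A * (flat c B)ᴴ).trace := by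
    intro A B
    rw [sum_glue c]
    simp [Matrix.trace, Matrix.mul_apply, flat]
  rw [key, key, flat_siteApply, flat_siteApply, Matrix.conjTranspose_mul, Matrix.mul_assoc,
    Matrix.trace_mul_comm, Matrix.mul_assoc, Matrix.mul_assoc, hV, Matrix.mul_one]

theorem siteReduced_siteApply_ne {m n : ℕ} (c d : Fin n) (hdc : d ≠ c)
    (V : Matrix (Fin m) (Fin m) ℂ) (hV : Vᴴ * V = 1) (Φ : (Fin n → Fin m) → ℂ) :
    siteReduced d (siteApply c V Φ) = siteReduced d Φ := by
  ext s t
  have h := siteApply_isometry c V hV (fun x => if x d = s then Φ x else 0)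
    (fun x => Φ (Function.update x d t))
  simp only [siteReduced, Matrix.of_apply, Finset.sum_filter]
  convert h using 1
  · refine Finset.sum_congr rfl fun x _ => ?_
    by_cases hx : x d = s
    · simp only [hx, if_true, siteApply, Function.update_of_ne hdc, Function.update_of_ne hdc.symm,
        Function.update_comm hdc]
    · simp [hx, siteApply, Function.update_of_ne hdc]
  · refine Finset.sum_congr rfl fun x _ => ?_
    split_ifs <;> simp

theorem exists_diag {m : ℕ} (A : Matrix (Fin m) (Fin m) ℂ) (hA : A.IsHermitian)
    (l : Fin m → ℝ) (h : ∃ σ : Equiv.Perm (Fin m), ∀ i, l i = hA.eigenvalues (σ i)) :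
    ∃ V : Matrix (Fin m) (Fin m) ℂ, Vᴴ * V = 1 ∧
      V * A * Vᴴ = Matrix.diagonal (fun i => (l i : ℂ)) := by
  obtain ⟨σ, hσ⟩ := h
  set U : Matrix (Fin m) (Fin m) ℂ := (hA.eigenvectorUnitary : Matrix (Fin m) (Fin m) ℂ) with hU
  have hUU : Uᴴ * U = 1 := Matrix.mem_unitaryGroup_iff'.mp hA.eigenvectorUnitary.2
  have hsp : A = U * Matrix.diagonal (fun i => (hA.eigenvalues i : ℂ)) * Uᴴ := by
    have := hA.spectral_theorem
    rw [Unitary.conjStarAlgAut_apply] at this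
    exact this
  have hd : Uᴴ * A * U = Matrix.diagonal (fun i => (hA.eigenvalues i : ℂ)) := by
    generalize Matrix.diagonal (fun i => (hA.eigenvalues i : ℂ)) = D at *
    calc Uᴴ * A * U = (Uᴴ * U) * D * (Uᴴ * U) := by
          rw [hsp]; simp only [Matrix.mul_assoc]
      _ = D := by rw [hUU]; simp
  refine ⟨Uᴴ.submatrix σ id, ?_, ?_⟩
  · rw [mul_eq_one_comm]
    ext i j
    have := congrFun (congrFun hUU (σ i)) (σ j)
    simp only [Matrix.mul_apply, Matrix.one_apply, EmbeddingLike.apply_eq_iff_eq] at this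
    simpa [Matrix.mul_apply, Matrix.one_apply] using this
  · have h1 : Uᴴ.submatrix σ id * A * (Uᴴ.submatrix σ id)ᴴ = (Uᴴ * A * U).submatrix σ σ := by
      ext i j
      simp [Matrix.mul_apply]
    rw [h1, hd]
    ext i j
    simp [Matrix.diagonal_apply, hσ]

theorem exists_all_diag {m n : ℕ} (Ψ : (Fin n → Fin m) → ℂ)
    (hherm : ∀ a : Fin n, (siteReduced a Ψ).IsHermitian)
    (lam : Fin n → Fin m → ℝ)
    (heig : ∀ a, ∃ σ : Equiv.Perm (Fin m), ∀ i, lam a i = (hherm a).eigenvalues (σ i))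
    (S : Finset (Fin n)) :
    ∃ Φ : (Fin n → Fin m) → ℂ,
      (∀ c ∈ S, siteReduced c Φ = Matrix.diagonal (fun i => (lam c i : ℂ))) ∧
      (∀ c ∉ S, siteReduced c Φ = siteReduced c Ψ) := by
  induction S using Finset.induction_on with
  | empty => exact ⟨Ψ, by simp, by simp⟩
  | insert c S hc ih =>
    obtain ⟨Φ, h1, h2⟩ := ih
    obtain ⟨V, hV, hVA⟩ := exists_diag _ (hherm c) (lam c) (heig c)
    refine ⟨siteApply c V Φ, ?_, ?_⟩
    · intro d hd
      by_cases hdc : d = c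
      · subst hdc
        rw [siteReduced_siteApply_self, h2 d hc, hVA]
      · rw [siteReduced_siteApply_ne c d hdc V hV]
        exact h1 d (by simpa [hdc] using hd)
    · intro d hd
      simp only [Finset.mem_insert, not_or] at hd
      rw [siteReduced_siteApply_ne c d hd.1 V hV]
      exact h2 d hd.2

theorem siteReduced_diag {m n : ℕ} (c : Fin n) (Φ : (Fin n → Fin m) → ℂ) (i : Fin m) :
    siteReduced c Φ i i
      = ((∑ x ∈ Finset.univ.filter (fun x : Fin n → Fin m => x c = i),
          Complex.normSq (Φ x) : ℝ) : ℂ) := by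
  simp only [siteReduced, Matrix.of_apply]
  push_cast
  refine Finset.sum_congr rfl fun x hx => ?_
  simp only [Finset.mem_filter, Finset.mem_univ, true_and] at hx
  rw [← hx, Function.update_eq_self, Complex.mul_conj]

theorem sum_mass {m n : ℕ} (c : Fin n) (Φ : (Fin n → Fin m) → ℂ) (q : ℕ) (g : Fin m → ℝ)
    (hg : ∀ i, siteReduced c Φ i i = (g i : ℂ)) :
    ∑ i ∈ Finset.univ.filter (fun i : Fin m => i.val < q), g i
      = ∑ x : Fin n → Fin m, if (x c).val < q then Complex.normSq (Φ x) else 0 := by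
  have h : ∀ i, g i = ∑ x : Fin n → Fin m, if x c = i then Complex.normSq (Φ x) else 0 := by
    intro i
    have := (hg i).symm.trans (siteReduced_diag c Φ i)
    rw [← Finset.sum_filter]
    exact_mod_cast this
  simp_rw [h]
  rw [Finset.sum_comm]
  refine Finset.sum_congr rfl fun x _ => ?_
  rw [Finset.sum_ite_eq]
  simp

theorem ky_fan {m : ℕ} (l : Fin m → ℝ) (hl : Monotone l) (V : Matrix (Fin m) (Fin m) ℂ)
    (h1 : Vᴴ * V = 1) (h2 : V * Vᴴ = 1) (p : ℕ) (hp : p < m) :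
    ∑ i ∈ Finset.univ.filter (fun i : Fin m => i.val < p), l i
      ≤ ∑ k ∈ Finset.univ.filter (fun i : Fin m => i.val < p),
          ∑ i, Complex.normSq (V k i) * l i := by
  have hrow : ∀ k, ∑ i, Complex.normSq (V k i) = 1 := by
    intro k
    have := congrFun (congrFun h2 k) k
    simp only [Matrix.mul_apply, Matrix.conjTranspose_apply, Matrix.one_apply_eq,
      ← starRingEnd_apply, Complex.mul_conj] at this
    exact_mod_cast this
  have hcol : ∀ i, ∑ k, Complex.normSq (V k i) = 1 := by
    intro k
    have := congrFun (congrFun h1 k) k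
    simp only [Matrix.mul_apply, Matrix.conjTranspose_apply, Matrix.one_apply_eq,
      ← starRingEnd_apply, mul_comm _ (V _ _), Complex.mul_conj] at this
    exact_mod_cast this
  set P := Finset.univ.filter (fun i : Fin m => i.val < p) with hP
  let w : Fin m → ℝ := fun i => ∑ k ∈ P, Complex.normSq (V k i)
  have hw0 : ∀ i, 0 ≤ w i := fun i => Finset.sum_nonneg fun _ _ => Complex.normSq_nonneg _
  have hw1 : ∀ i, w i ≤ 1 := fun i => by
    rw [← hcol i]
    exact Finset.sum_le_sum_of_subset_of_nonneg (Finset.subset_univ _)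
      fun _ _ _ => Complex.normSq_nonneg _
  have hws : ∑ i, w i = ∑ i, if i ∈ P then (1 : ℝ) else 0 := by
    simp only [w]
    rw [Finset.sum_comm, ← Finset.sum_filter]
    simp [hrow]
  have hR : ∑ k ∈ P, ∑ i, Complex.normSq (V k i) * l i = ∑ i, w i * l i := by
    rw [Finset.sum_comm]
    simp only [w, Finset.sum_mul]
  have hL : ∑ i ∈ P, l i = ∑ i, (if i ∈ P then (1 : ℝ) else 0) * l i := by
    simp [Finset.sum_ite_mem]
  rw [hR, hL]
  let t := l ⟨p, hp⟩
  have hkey : ∑ i, (if i ∈ P then (1 : ℝ) else 0) * (l i - t) ≤ ∑ i, w i * (l i - t) := by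
    refine Finset.sum_le_sum fun i _ => ?_
    by_cases hi : i.val < p
    · have : l i ≤ t := hl (by rw [Fin.le_def]; exact hi.le)
      simp only [hP, Finset.mem_filter, Finset.mem_univ, true_and, hi, if_true]
      nlinarith [hw1 i]
    · have : t ≤ l i := hl (by rw [Fin.le_def]; exact not_lt.mp hi)
      simp only [hP, Finset.mem_filter, Finset.mem_univ, true_and, hi, if_false]
      nlinarith [hw0 i]
  simp only [mul_sub, Finset.sum_sub_distrib, ← Finset.sum_mul] at hkey
  rw [hws] at hkey
  linarith

/-- Han–Zhang–Guo inequalities, necessity.  Let `Ψ` be a unit vector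
in `(ℂᵐ)^{⊗n}` with one-particle reduced density matrices `ρ_1, …, ρ_n`, and let
`lam a 0 ≤ lam a 1 ≤ ⋯ ≤ lam a (m-1)` be the eigenvalues of `ρ_a` in ascending order.
Then for all `a ≠ b` and `1 ≤ p ≤ m - 1`,
`Σ_{i=1}^p λ_i^{(a)} ≤ Σ_{i=1}^p λ_i^{(b)} + Σ_{c≠a,b} Σ_{i=1}^{m-1} λ_i^{(c)}`. -/
theorem stmt_17 (m n : ℕ) (Ψ : (Fin n → Fin m) → ℂ)
    (hΨ : ∑ x : Fin n → Fin m, Complex.normSq (Ψ x) = 1)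
    (hherm : ∀ a : Fin n, (siteReduced a Ψ).IsHermitian)
    (lam : Fin n → Fin m → ℝ)
    (hmono : ∀ a, Monotone (lam a))
    (heig : ∀ a, ∃ σ : Equiv.Perm (Fin m), ∀ i, lam a i = (hherm a).eigenvalues (σ i))
    (a b : Fin n) (hab : a ≠ b) (p : ℕ) (hp1 : 1 ≤ p) (hp2 : p ≤ m - 1) :
    (∑ i ∈ Finset.univ.filter (fun i : Fin m => i.val < p), lam a i)
      ≤ (∑ i ∈ Finset.univ.filter (fun i : Fin m => i.val < p), lam b i)
        + ∑ c ∈ (Finset.univ.erase a).erase b,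
            ∑ i ∈ Finset.univ.filter (fun i : Fin m => i.val < m - 1), lam c i := by
  have hm : p < m := by omega
  obtain ⟨Φ, hΦ, -⟩ := exists_all_diag Ψ hherm lam heig Finset.univ
  replace hΦ := fun c => hΦ c (Finset.mem_univ c)
  let top : Fin m := ⟨m - 1, by omega⟩
  let conf : Fin m → Fin m → Fin n → Fin m := fun i j c =>
    if c = a then i else if c = b then j else top
  obtain ⟨V, hV1, hV2, hV3⟩ := exists_lower (Matrix.of fun i j => Φ (conf i j))
  let X := siteApply a V Φ
  have hXa : ∀ k, siteReduced a X k k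
      = ((∑ i, Complex.normSq (V k i) * lam a i : ℝ) : ℂ) := by
    intro k
    simp only [X]
    rw [siteReduced_siteApply_self, hΦ a, Matrix.mul_apply]
    push_cast
    refine Finset.sum_congr rfl fun i _ => ?_
    rw [Matrix.mul_diagonal, Matrix.conjTranspose_apply, ← starRingEnd_apply, mul_right_comm,
      Complex.mul_conj]
  have hXc : ∀ c, c ≠ a → ∀ k, siteReduced c X k k = (lam c k : ℂ) := by
    intro c hc k
    simp only [X]
    rw [siteReduced_siteApply_ne a c hc V hV1, hΦ c, Matrix.diagonal_apply_eq]
  have hzero : ∀ x : Fin n → Fin m, (x a).val < p → ¬ (x b).val < p →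
      (∀ c ∈ (Finset.univ.erase a).erase b, ¬ (x c).val < m - 1) → X x = 0 := by
    intro x ha hb hc
    have := hV3 (x a) (x b) (by rw [Fin.lt_def]; omega)
    rw [Matrix.mul_apply] at this
    simp only [X, siteApply]
    rw [← this]
    refine Finset.sum_congr rfl fun s _ => ?_
    have : Function.update x a s = conf s (x b) := by
      ext c
      by_cases hca : c = a
      · subst hca; simp [conf]
      · by_cases hcb : c = b
        · subst hcb; simp [conf, hca]
        · have := hc c (by simp [hca, hcb])
          have h2 := (x c).2
          simp only [Function.update_of_ne hca, conf, hca, hcb, if_false, top]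
          omega
    rw [this, Matrix.of_apply]
  refine (ky_fan (lam a) (hmono a) V hV1 hV2 p hm).trans ?_
  rw [sum_mass a X p _ hXa, sum_mass b X p _ (hXc b hab.symm)]
  have hcs : ∑ c ∈ (Finset.univ.erase a).erase b,
      ∑ i ∈ Finset.univ.filter (fun i : Fin m => i.val < m - 1), lam c i
      = ∑ x : Fin n → Fin m, ∑ c ∈ (Finset.univ.erase a).erase b,
        if (x c).val < m - 1 then Complex.normSq (X x) else 0 := by
    rw [Finset.sum_comm (s := (Finset.univ : Finset (Fin n → Fin m)))]
    refine Finset.sum_congr rfl fun c hc => ?_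
    simp only [Finset.mem_erase] at hc
    exact sum_mass c X (m - 1) _ (hXc c hc.2.1)
  rw [hcs, ← Finset.sum_add_distrib]
  refine Finset.sum_le_sum fun x _ => ?_
  have hN := Complex.normSq_nonneg (X x)
  have hS : ∀ c ∈ (Finset.univ.erase a).erase b,
      0 ≤ if (x c).val < m - 1 then Complex.normSq (X x) else 0 := by
    intro c _
    split_ifs <;> simp [hN]
  have hS' := Finset.sum_nonneg hS
  by_cases ha : (x a).val < p
  · by_cases hb : (x b).val < p
    · simp only [ha, hb, if_true]; linarith
    · by_cases hc : ∀ c ∈ (Finset.univ.erase a).erase b, ¬ (x c).val < m - 1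
      · simp [hzero x ha hb hc]
      · push Not at hc
        obtain ⟨c, hc, hc'⟩ := hc
        have := Finset.single_le_sum hS hc
        simp only [hc', if_true] at this
        simp only [ha, hb, if_true, if_false]
        linarith
  · simp only [ha, if_false]
    have : 0 ≤ if (x b).val < p then Complex.normSq (X x) else 0 := by
      split_ifs <;> simp [hN]
    linarith
end

section
/- Coleman's theorem: let n ≥ 1 and let ρ be an m×m density matrix. Then ρ is the reduced one-party state of a system of n fermions — i.e. there exists a density matrix R on (ℂ^m)^{⊗n} supported on the antisymmetric subspace (meaning P_π R = sgn(π) R for every permutation π of the n factors, where P_π is the corresponding permutation operator) whose one-party reduced state equals ρ — if and only if every eigenvalue λ of ρ satisfies 0 ≤ λ ≤ 1/n. -/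
open scoped Matrix ComplexOrder

/-- The permutation operator `P_π` on `(ℂᵐ)^{⊗n}`, acting on basis vectors by
permuting the tensor factors: `P_π e_x = e_{x ∘ π⁻¹}`. -/
def permOp {m n : ℕ} (π : Equiv.Perm (Fin n)) :
    Matrix (Fin n → Fin m) (Fin n → Fin m) ℂ :=
  Matrix.of fun x y => if x = y ∘ π.symm then (1 : ℂ) else 0


lemma permOp_mul_apply {m n : ℕ} (π : Equiv.Perm (Fin n))
    (R : Matrix (Fin n → Fin m) (Fin n → Fin m) ℂ) (x y : Fin n → Fin m) :
    (permOp π * R : Matrix (Fin n → Fin m) (Fin n → Fin m) ℂ) x y = R (x ∘ π) y := by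
  rw [Matrix.mul_apply, Finset.sum_eq_single (x ∘ π)]
  · have : x = (x ∘ π) ∘ π.symm := by ext i; simp
    simp [permOp, ← this]
  · intro z _ hz
    have : x ≠ z ∘ π.symm := by
      rintro rfl
      apply hz
      ext i; simp
    simp [permOp, this]
  · simp

/-- Representability by `k+1` fermions. -/
def FermiRep (k m : ℕ) (ρ : Matrix (Fin m) (Fin m) ℂ) : Prop :=
  ∃ R : Matrix (Fin (k+1) → Fin m) (Fin (k+1) → Fin m) ℂ,
    R.PosSemidef ∧
    (∀ (π : Equiv.Perm (Fin (k+1))) (x y : Fin (k+1) → Fin m),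
      R (x ∘ π) y = ((Equiv.Perm.sign π : ℤ) : ℂ) * R x y) ∧
    (∀ s t, ρ s t = ∑ w : Fin k → Fin m,
      R (Fin.cons s w : Fin (k+1) → Fin m) (Fin.cons t w : Fin (k+1) → Fin m))

lemma sum_cons {k m : ℕ} (g : (Fin (k+1) → Fin m) → ℂ) :
    ∑ x, g x = ∑ s, ∑ w : Fin k → Fin m, g (Fin.cons s w : Fin (k+1) → Fin m) := by
  rw [← (Fin.consEquiv (fun _ => Fin m)).sum_comp, Fintype.sum_prod_type]
  rfl

lemma sum_filter_cons {k m : ℕ} (g : (Fin (k+1) → Fin m) → ℂ) (s : Fin m) :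
    ∑ x ∈ Finset.univ.filter (fun x : Fin (k+1) → Fin m => x 0 = s), g x
      = ∑ w : Fin k → Fin m, g (Fin.cons s w : Fin (k+1) → Fin m) := by
  rw [Finset.sum_filter, sum_cons, Finset.sum_eq_single s]
  · simp
  · intro b _ hb; simp [hb]
  · simp

lemma rep_iff (k m : ℕ) (hn : 1 ≤ k + 1) (ρ : Matrix (Fin m) (Fin m) ℂ) (htr : ρ.trace = 1) :
    (∃ R : Matrix (Fin (k+1) → Fin m) (Fin (k+1) → Fin m) ℂ,
        R.PosSemidef ∧ R.trace = 1 ∧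
        (∀ π : Equiv.Perm (Fin (k+1)),
          permOp π * R = ((Equiv.Perm.sign π : ℤ) : ℂ) • R) ∧
        (∀ s t, ρ s t = ∑ x ∈ Finset.univ.filter
            (fun x : Fin (k+1) → Fin m => x ⟨0, hn⟩ = s),
          R x (Function.update x ⟨0, hn⟩ t))) ↔ FermiRep k m ρ := by
  have h0 : (⟨0, hn⟩ : Fin (k+1)) = 0 := rfl
  simp only [h0, sum_filter_cons, Fin.update_cons_zero]
  constructor
  · rintro ⟨R, h1, -, h2, h3⟩
    refine ⟨R, h1, fun π x y => ?_, h3⟩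
    rw [← permOp_mul_apply π R x y, h2]; rfl
  · rintro ⟨R, h1, h2, h3⟩
    refine ⟨R, h1, ?_, fun π => ?_, h3⟩
    · rw [← htr, Matrix.trace, Matrix.trace, sum_cons]
      simp [h3]
    · ext x y
      rw [permOp_mul_apply, h2]; rfl

/-- tensor power of a matrix -/
def tpow (n : ℕ) {m : ℕ} (U : Matrix (Fin m) (Fin m) ℂ) :
    Matrix (Fin n → Fin m) (Fin n → Fin m) ℂ :=
  Matrix.of fun x y => ∏ i, U (x i) (y i)

lemma tpow_mul (n : ℕ) {m : ℕ} (U V : Matrix (Fin m) (Fin m) ℂ) :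
    tpow n U * tpow n V = tpow n (U * V) := by
  ext x y
  simp only [tpow, Matrix.mul_apply, Matrix.of_apply, ← Finset.prod_mul_distrib]
  rw [Finset.prod_univ_sum, Fintype.piFinset_univ]

lemma tpow_one (n : ℕ) {m : ℕ} : tpow n (1 : Matrix (Fin m) (Fin m) ℂ) = 1 := by
  ext x y
  simp only [tpow, Matrix.of_apply, Matrix.one_apply]
  rw [Finset.prod_ite_zero]
  simp [funext_iff]

lemma tpow_conjTranspose (n : ℕ) {m : ℕ} (U : Matrix (Fin m) (Fin m) ℂ) :
    (tpow n U)ᴴ = tpow n Uᴴ := by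
  ext x y
  simp [tpow, Matrix.conjTranspose_apply]

lemma tpow_comp {n m : ℕ} (U : Matrix (Fin m) (Fin m) ℂ) (π : Equiv.Perm (Fin n))
    (x y : Fin n → Fin m) : tpow n U (x ∘ π) (y ∘ π) = tpow n U x y := by
  simp only [tpow, Matrix.of_apply, Function.comp]
  exact Equiv.prod_comp π (fun i => U (x i) (y i))

lemma tpow_cons {k m : ℕ} (U : Matrix (Fin m) (Fin m) ℂ) (s t : Fin m) (w v : Fin k → Fin m) :
    tpow (k+1) U (Fin.cons s w : Fin (k+1) → Fin m) (Fin.cons t v : Fin (k+1) → Fin m)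
      = U s t * tpow k U w v := by
  simp [tpow, Fin.prod_univ_succ]

lemma FermiRep.conj {k m : ℕ} {ρ : Matrix (Fin m) (Fin m) ℂ} (h : FermiRep k m ρ)
    (U : Matrix (Fin m) (Fin m) ℂ) (hU : Uᴴ * U = 1) : FermiRep k m (U * ρ * Uᴴ) := by
  obtain ⟨R, h1, h2, h3⟩ := h
  refine ⟨tpow (k+1) U * R * (tpow (k+1) U)ᴴ, h1.mul_mul_conjTranspose_same _, ?_, ?_⟩
  · intro π x y
    rw [mul_assoc, Matrix.mul_apply, Matrix.mul_apply]
    have e : Function.Bijective (fun z : Fin (k+1) → Fin m => z ∘ π) :=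
      (Equiv.arrowCongr π.symm (Equiv.refl (Fin m))).bijective
    rw [← e.sum_comp, Finset.mul_sum]
    refine Finset.sum_congr rfl fun z _ => ?_
    rw [tpow_comp]
    have : (R * (tpow (k+1) U)ᴴ) (z ∘ π) y =
        ((Equiv.Perm.sign π : ℤ) : ℂ) * (R * (tpow (k+1) U)ᴴ) z y := by
      rw [Matrix.mul_apply, Matrix.mul_apply, Finset.mul_sum]
      refine Finset.sum_congr rfl fun u _ => ?_
      rw [h2]; ring
    rw [this]; ring
  · intro s t
    have key : ∀ v v' : Fin k → Fin m,
        ∑ w, tpow k U w v * (tpow k Uᴴ) v' w = if v' = v then 1 else 0 := by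
      intro v v'
      have : (tpow k Uᴴ * tpow k U) v' v = (1 : Matrix (Fin k → Fin m) (Fin k → Fin m) ℂ) v' v := by
        rw [tpow_mul, hU, tpow_one]
      rw [Matrix.one_apply] at this
      rw [← this, Matrix.mul_apply]
      exact Finset.sum_congr rfl fun _ _ => mul_comm _ _
    simp only [tpow_conjTranspose, Matrix.mul_apply, Finset.sum_mul, sum_cons, tpow_cons]
    calc _ = ∑ b, ∑ a, ∑ v, U s a * R (Fin.cons a v : Fin (k+1) → Fin m) 
                (Fin.cons b v : Fin (k+1) → Fin m) * Uᴴ b t := by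
            simp only [h3, Finset.mul_sum, Finset.sum_mul]
      _ = ∑ b, ∑ a, ∑ v', ∑ v, U s a * R (Fin.cons a v : Fin (k+1) → Fin m) 
                (Fin.cons b v' : Fin (k+1) → Fin m) * Uᴴ b t * 
                ∑ w, tpow k U w v * (tpow k Uᴴ) v' w := by
            simp [key]
      _ = _ := by
            simp only [Finset.mul_sum]
            symm
            rw [Finset.sum_comm]
            refine Finset.sum_congr rfl fun b _ => ?_
            rw [Finset.sum_comm, Finset.sum_comm (s := Finset.univ (α := Fin m))]
            refine Finset.sum_congr rfl fun v' _ => ?_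
            rw [Finset.sum_comm]
            refine Finset.sum_congr rfl fun a _ => ?_
            rw [Finset.sum_comm]
            refine Finset.sum_congr rfl fun v _ => ?_
            refine Finset.sum_congr rfl fun w _ => ?_
            ring

lemma FermiRep.diag_le {k m : ℕ} {d : Fin m → ℝ} (hd : ∑ i, d i = 1)
    (h : FermiRep k m (Matrix.diagonal (fun i => (d i : ℂ)))) (i : Fin m) :
    d i ≤ 1 / ((k + 1 : ℕ) : ℝ) := by
  obtain ⟨R, h1, h2, h3⟩ := h
  have hherm : ∀ x y, R x y = star (R y x) := fun x y => (h1.1.apply x y).symm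
  have hinv : ∀ (π : Equiv.Perm (Fin (k+1))) (x : Fin (k+1) → Fin m), R (x ∘ π) (x ∘ π) = R x x := by
    intro π x
    rw [h2, hherm, h2]
    have : ((Equiv.Perm.sign π : ℤ) : ℂ) * ((Equiv.Perm.sign π : ℤ) : ℂ) = 1 := by
      rw [← Int.cast_mul, ← Units.val_mul, Int.units_mul_self]; simp
    rw [star_mul', ← hherm, ← mul_assoc]
    simp [this]
  have hzero : ∀ x : Fin (k+1) → Fin m, ¬ Function.Injective x → R x x = 0 := by
    intro x hx
    simp only [Function.Injective, not_forall] at hx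
    obtain ⟨a, b, hab, hne⟩ := hx
    have h4 := h2 (Equiv.swap a b) x x
    have : x ∘ (Equiv.swap a b) = x := by
      ext j
      simp only [Function.comp, Equiv.swap_apply_def]
      split_ifs with h5 h6
      · rw [h5, hab]
      · rw [h6, hab]
      · rfl
    rw [this, Equiv.Perm.sign_swap hne] at h4
    simp at h4
    have : (2 : ℂ) * R x x = 0 := by linear_combination h4
    simpa using this
  have hnn : ∀ x, 0 ≤ (R x x).re := fun x => by
    have := h1.diag_nonneg (i := x)
    exact (Complex.nonneg_iff.mp this).1
  have hdi : ∀ i, d i = ∑ x : Fin (k+1) → Fin m, if x 0 = i then (R x x).re else 0 := by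
    intro i
    have h5 := h3 i i
    rw [Matrix.diagonal_apply_eq] at h5
    rw [← sum_filter_cons (fun x => R x x)] at h5
    have h6 := congrArg Complex.re h5
    rw [Complex.ofReal_re, Complex.re_sum, Finset.sum_filter] at h6
    exact h6
  have htr : ∑ x : Fin (k+1) → Fin m, (R x x).re = 1 := by
    rw [← hd]
    simp only [hdi]
    rw [Finset.sum_comm]
    simp
  have hdk : ∀ j : Fin (k+1), d i = ∑ x : Fin (k+1) → Fin m, if x j = i then (R x x).re else 0 := by
    intro j
    rw [hdi i]
    have e : Function.Bijective (fun z : Fin (k+1) → Fin m => z ∘ (Equiv.swap 0 j)) :=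
      (Equiv.arrowCongr (Equiv.swap 0 j).symm (Equiv.refl (Fin m))).bijective
    rw [← e.sum_comp]
    refine Finset.sum_congr rfl fun x _ => ?_
    simp only [hinv]
    simp
  have hsum : ((k + 1 : ℕ) : ℝ) * d i ≤ 1 := by
    calc ((k + 1 : ℕ) : ℝ) * d i = ∑ j : Fin (k+1), d i := by simp
      _ = ∑ j : Fin (k+1), ∑ x : Fin (k+1) → Fin m, if x j = i then (R x x).re else 0 :=
          Finset.sum_congr rfl fun j _ => hdk j
      _ = ∑ x : Fin (k+1) → Fin m, ∑ j : Fin (k+1), if x j = i then (R x x).re else 0 :=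
          Finset.sum_comm
      _ ≤ ∑ x : Fin (k+1) → Fin m, (R x x).re := by
          refine Finset.sum_le_sum fun x _ => ?_
          by_cases hx : Function.Injective x
          · by_cases hj : ∃ j, x j = i
            · obtain ⟨j, rfl⟩ := hj
              simp [hx.eq_iff]
            · push Not at hj
              simp [hj, hnn]
          · simp [hzero x hx]
      _ = 1 := htr
  rw [le_div_iff₀ (by positivity)]
  linarith

/-- Slater determinant, unnormalised. -/
noncomputable def slater {k m : ℕ} (f : Fin (k+1) → Fin m) (x : Fin (k+1) → Fin m) : ℂ :=
  ∑ σ : Equiv.Perm (Fin (k+1)), if x = f ∘ σ then ((Equiv.Perm.sign σ : ℤ) : ℂ) else 0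

lemma sign_mul_self_c {n : ℕ} (σ : Equiv.Perm (Fin n)) :
    ((Equiv.Perm.sign σ : ℤ) : ℂ) * ((Equiv.Perm.sign σ : ℤ) : ℂ) = 1 := by
  rw [← Int.cast_mul, ← Units.val_mul, Int.units_mul_self]; simp

lemma slater_comp {k m : ℕ} (f : Fin (k+1) → Fin m) (π : Equiv.Perm (Fin (k+1)))
    (x : Fin (k+1) → Fin m) :
    slater f (x ∘ π) = ((Equiv.Perm.sign π : ℤ) : ℂ) * slater f x := by
  unfold slater
  rw [← Equiv.sum_comp (Equiv.mulRight π), Finset.mul_sum]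
  refine Finset.sum_congr rfl fun σ _ => ?_
  have : (x ∘ π = f ∘ (Equiv.mulRight π σ)) ↔ x = f ∘ σ := by
    simp only [Equiv.coe_mulRight, Equiv.Perm.coe_mul, ← Function.comp_assoc]
    exact π.surjective.injective_comp_right.eq_iff
  simp only [this]
  split_ifs
  · simp [mul_comm]
  · simp

lemma star_slater {k m : ℕ} (f : Fin (k+1) → Fin m) (x : Fin (k+1) → Fin m) :
    star (slater f x) = slater f x := by
  simp [slater, apply_ite]

lemma sum_perm_eval {k : ℕ} (g : Fin (k+1) → ℂ) :
    ((k + 1 : ℕ) : ℂ) * ∑ σ : Equiv.Perm (Fin (k+1)), g (σ 0) =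
      ((k+1).factorial : ℂ) * ∑ j, g j := by
  have h : ∀ j : Fin (k+1), ∑ σ : Equiv.Perm (Fin (k+1)), g (σ 0) =
      ∑ σ : Equiv.Perm (Fin (k+1)), g (σ j) := by
    intro j
    rw [← Equiv.sum_comp (Equiv.mulRight (Equiv.swap 0 j))]
    simp
  calc _ = ∑ j : Fin (k+1), ∑ σ : Equiv.Perm (Fin (k+1)), g (σ 0) := by simp
    _ = ∑ j : Fin (k+1), ∑ σ : Equiv.Perm (Fin (k+1)), g (σ j) :=
        Finset.sum_congr rfl fun j _ => h j
    _ = ∑ σ : Equiv.Perm (Fin (k+1)), ∑ j : Fin (k+1), g (σ j) := Finset.sum_comm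
    _ = ∑ σ : Equiv.Perm (Fin (k+1)), ∑ j : Fin (k+1), g j :=
        Finset.sum_congr rfl fun σ _ => Equiv.sum_comp σ g
    _ = _ := by simp [Fintype.card_perm]

lemma slater_red {k m : ℕ} (f : Fin (k+1) → Fin m) (hf : Function.Injective f) (s t : Fin m) :
    ((k + 1 : ℕ) : ℂ) * ∑ w : Fin k → Fin m, slater f (Fin.cons s w : Fin (k+1) → Fin m) *
      slater f (Fin.cons t w : Fin (k+1) → Fin m) =
      ((k+1).factorial : ℂ) * if s = t then ∑ j, (if f j = s then 1 else 0) else 0 := by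
  have h1 : ∑ w : Fin k → Fin m, slater f (Fin.cons s w : Fin (k+1) → Fin m) *
      slater f (Fin.cons t w : Fin (k+1) → Fin m) =
      ∑ σ : Equiv.Perm (Fin (k+1)), if s = t then (if f (σ 0) = s then 1 else 0) else 0 := by
    have h2 := sum_filter_cons (fun x => slater f x * slater f (Function.update x 0 t)) s
    simp only [Fin.update_cons_zero] at h2
    rw [← h2, Finset.sum_filter]
    have h3 : ∀ x : Fin (k+1) → Fin m,
      (if x 0 = s then slater f x * slater f (Function.update x 0 t) else 0) =
       ∑ σ : Equiv.Perm (Fin (k+1)), if x = f ∘ σ then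
          (if f (σ 0) = s then ((Equiv.Perm.sign σ : ℤ) : ℂ) *
            slater f (Function.update (f ∘ σ) 0 t) else 0) else 0 := by
      intro x
      conv_lhs => rw [slater, Finset.sum_mul]
      by_cases hx : x 0 = s
      · rw [if_pos hx]
        refine Finset.sum_congr rfl fun σ _ => ?_
        by_cases h : x = f ∘ σ
        · rw [if_pos h, if_pos h, ← h]
          have : f (σ 0) = s := by rw [← hx, h]; rfl
          rw [if_pos this]
        · simp [h]
      · rw [if_neg hx]
        symm
        refine Finset.sum_eq_zero fun σ _ => ?_
        by_cases h : x = f ∘ σ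
        · have : f (σ 0) ≠ s := by rw [h] at hx; exact hx
          simp [this]
        · simp [h]
    simp only [h3]
    rw [Finset.sum_comm]
    refine Finset.sum_congr rfl fun σ _ => ?_
    rw [Finset.sum_ite_eq' ]
    simp only [Finset.mem_univ, if_true]
    by_cases hs : f (σ 0) = s
    swap
    · simp [hs]
    simp only [hs, if_true]
    have h4 : slater f (Function.update (f ∘ σ) 0 t) =
        if s = t then ((Equiv.Perm.sign σ : ℤ) : ℂ) else 0 := by
      unfold slater
      rw [Finset.sum_eq_single σ]
      · congr 1
        rw [eq_iff_iff, Function.update_eq_self_iff]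
        simp [hs, eq_comm]
      · intro τ _ hτ
        rw [if_neg]
        intro h5
        apply hτ
        have h6 : ∀ j, j ≠ 0 → τ j = σ j := by
          intro j hj
          have := congrFun h5 j
          rw [Function.update_of_ne hj] at this
          exact (hf this).symm
        have h7 : (τ⁻¹ * σ) 0 = 0 := by
          by_contra h8
          have h9 := h6 _ h8
          have h10 : τ ((τ⁻¹ * σ) 0) = σ 0 := by simp
          exact h8 (σ.injective (h10.symm.trans h9)).symm
        ext1 j
        by_cases hj : j = 0
        · subst hj
          rw [Equiv.Perm.mul_apply, Equiv.Perm.inv_eq_iff_eq] at h7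
          exact h7.symm
        · exact h6 j hj
      · simp
    rw [h4]
    split_ifs
    · exact sign_mul_self_c σ
    · simp
  rw [h1]
  split_ifs
  · exact sum_perm_eval (fun j => if f j = s then 1 else 0)
  · simp

lemma fermiRep_diagonal {k m : ℕ} {d : Fin m → ℝ} (hd : ∑ i, d i = 1)
    (h0 : ∀ i, 0 ≤ d i) (hle : ∀ i, d i ≤ 1 / ((k + 1 : ℕ) : ℝ)) :
    FermiRep k m (Matrix.diagonal (fun i => (d i : ℂ))) := by
  have hpos : (0 : ℝ) < ((k + 1 : ℕ) : ℝ) := by positivity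
  have hkm : k + 1 ≤ m := by
    have : (1 : ℝ) ≤ ∑ i : Fin m, 1 / ((k + 1 : ℕ) : ℝ) := by
      exact hd.symm.le.trans (Finset.sum_le_sum fun i _ => hle i)
    rw [Finset.sum_const, Finset.card_univ, Fintype.card_fin, nsmul_eq_mul, mul_one_div,
      le_div_iff₀ hpos, one_mul] at this
    exact_mod_cast this
  obtain ⟨r, rfl⟩ := Nat.exists_eq_add_of_le hkm
  have hle' : ∀ i, ((k + 1 : ℕ) : ℝ) * d i ≤ 1 := by
    intro i
    have := hle i
    rw [le_div_iff₀ hpos] at this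
    linarith
  have hs1 : ∑ i, (1 - ((k + 1 : ℕ) : ℝ) * d i) = r := by
    rw [Finset.sum_sub_distrib, ← Finset.mul_sum, hd]
    simp
  let M : Matrix (Fin (k+1+r)) (Fin (k+1+r)) ℝ := Matrix.of fun j i =>
    if (j : ℕ) < k + 1 then d i else (1 - ((k + 1 : ℕ) : ℝ) * d i) / r
  have hM : M ∈ doublyStochastic ℝ (Fin (k+1+r)) := by
    rw [mem_doublyStochastic_iff_sum]
    refine ⟨fun j i => ?_, fun j => ?_, fun i => ?_⟩
    · simp only [M, Matrix.of_apply]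
      split_ifs
      · exact h0 i
      · exact div_nonneg (by linarith [hle' i]) (by positivity)
    · simp only [M, Matrix.of_apply]
      split_ifs with h
      · exact hd
      · rw [← Finset.sum_div, hs1, div_self]
        have := j.2
        have : r ≠ 0 := by omega
        exact_mod_cast this
    · rw [Fin.sum_univ_add]
      simp only [M, Matrix.of_apply, Fin.val_castAdd, Fin.is_lt, if_true, Fin.val_natAdd]
      simp only [add_lt_iff_neg_left, not_lt_zero, if_false, Finset.sum_const, Finset.card_univ,
        Fintype.card_fin, nsmul_eq_mul]
      by_cases hr : (r : ℝ) = 0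
      · rw [hr] at hs1 ⊢
        rw [Finset.sum_eq_zero_iff_of_nonneg (fun i _ => by linarith [hle' i])] at hs1
        have := hs1 i (Finset.mem_univ i)
        simp only [zero_mul]
        linarith
      · field_simp
        ring
  obtain ⟨w, hw0, -, hw⟩ := exists_eq_sum_perm_of_mem_doublyStochastic hM
  let f : Equiv.Perm (Fin (k+1+r)) → Fin (k+1) → Fin (k+1+r) := fun σ j => σ (Fin.castAdd r j)
  have hf : ∀ σ, Function.Injective (f σ) := fun σ =>
    σ.injective.comp (Fin.castAdd_injective _ _)
  have hwd : ∀ s, ∑ σ, (w σ : ℂ) * ∑ j, (if f σ j = s then 1 else 0) =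
      ((k + 1 : ℕ) : ℂ) * (d s : ℂ) := by
    intro s
    have h5 : ∀ j : Fin (k+1), ∑ σ, w σ * (if f σ j = s then 1 else 0) = d s := by
      intro j
      have h6 := congrFun (congrFun hw (Fin.castAdd r j)) s
      rw [Matrix.sum_apply] at h6
      simp only [M, Matrix.of_apply, Fin.val_castAdd, Fin.is_lt, if_true] at h6
      rw [← h6]
      refine Finset.sum_congr rfl fun σ _ => ?_
      simp [Equiv.Perm.permMatrix, PEquiv.toMatrix_apply, f, eq_comm]
    simp only [Finset.mul_sum]
    rw [Finset.sum_comm]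
    have h7 : ∀ j : Fin (k+1), ∑ σ, (w σ : ℂ) * (if f σ j = s then 1 else 0) = d s := by
      intro j
      rw [← h5 j]; push_cast
      refine Finset.sum_congr rfl fun σ _ => ?_
      split_ifs <;> simp
    rw [Finset.sum_congr rfl fun j _ => h7 j]
    simp
  refine ⟨∑ σ, ((w σ / (k+1).factorial : ℝ) : ℂ) •
    Matrix.vecMulVec (slater (f σ)) (star (slater (f σ))), ?_, ?_, ?_⟩
  · refine Matrix.posSemidef_sum _ fun σ _ => ?_
    refine (Matrix.posSemidef_vecMulVec_self_star _).smul ?_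
    have := hw0 σ
    exact_mod_cast (by positivity : (0 : ℝ) ≤ w σ / (k+1).factorial)
  · intro π x y
    simp only [Matrix.sum_apply, Matrix.smul_apply, Matrix.vecMulVec_apply, slater_comp,
      Finset.mul_sum, smul_eq_mul]
    refine Finset.sum_congr rfl fun σ _ => ?_
    ring
  · intro s t
    have hn0 : ((k + 1 : ℕ) : ℂ) ≠ 0 := by exact_mod_cast hpos.ne'
    have hf0 : ((k+1).factorial : ℂ) ≠ 0 := by exact_mod_cast (Nat.factorial_ne_zero _)
    simp only [Matrix.sum_apply, Matrix.smul_apply, Matrix.vecMulVec_apply, Pi.star_apply,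
      star_slater, smul_eq_mul]
    rw [Finset.sum_comm]
    simp only [← Finset.mul_sum]
    apply mul_left_cancel₀ hn0
    rw [Finset.mul_sum]
    have h8 : ∀ σ, ((k + 1 : ℕ) : ℂ) * (((w σ / (k+1).factorial : ℝ) : ℂ) *
        ∑ v : Fin k → Fin (k+1+r), slater (f σ) (Fin.cons s v : Fin (k+1) → Fin (k+1+r)) *
          slater (f σ) (Fin.cons t v : Fin (k+1) → Fin (k+1+r))) =
        (w σ : ℂ) * if s = t then ∑ j, (if f σ j = s then 1 else 0) else 0 := by
      intro σ
      rw [mul_left_comm, slater_red _ (hf σ)]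
      push_cast
      field_simp
    simp only [h8]
    by_cases hst : s = t
    · subst hst
      simp only [if_true, hwd, Matrix.diagonal_apply_eq]
    · simp [hst, Matrix.diagonal_apply_ne]

/-- Coleman's theorem.  An `m×m` density matrix `ρ` is the reduced
one-party state of a system of `n` fermions — i.e. there is a density matrix `R` on
`(ℂᵐ)^{⊗n}` supported on the antisymmetric subspace (`P_π R = sgn(π) R` for all `π`)
whose one-party reduced state is `ρ` — if and only if every eigenvalue `λ` of `ρ`
satisfies `0 ≤ λ ≤ 1/n`. -/
theorem stmt_18 (n m : ℕ) (hn : 1 ≤ n) (ρ : Matrix (Fin m) (Fin m) ℂ)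
    (hρ : ρ.PosSemidef) (htr : ρ.trace = 1) :
    (∃ R : Matrix (Fin n → Fin m) (Fin n → Fin m) ℂ,
        R.PosSemidef ∧ R.trace = 1 ∧
        (∀ π : Equiv.Perm (Fin n),
          permOp π * R = ((Equiv.Perm.sign π : ℤ) : ℂ) • R) ∧
        (∀ s t, ρ s t = ∑ x ∈ Finset.univ.filter
            (fun x : Fin n → Fin m => x ⟨0, hn⟩ = s),
          R x (Function.update x ⟨0, hn⟩ t))) ↔
      ∀ i, 0 ≤ hρ.1.eigenvalues i ∧ hρ.1.eigenvalues i ≤ 1 / n := by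
  obtain ⟨k, rfl⟩ : ∃ k, n = k + 1 := ⟨n - 1, by omega⟩
  rw [rep_iff k m hn ρ htr]
  set U : Matrix (Fin m) (Fin m) ℂ := (hρ.1.eigenvectorUnitary : Matrix (Fin m) (Fin m) ℂ) with hUdef
  have hU1 : Uᴴ * U = 1 := Unitary.coe_star_mul_self hρ.1.eigenvectorUnitary
  have hU2 : U * Uᴴ = 1 := Unitary.coe_mul_star_self hρ.1.eigenvectorUnitary
  have hspec : ρ = U * Matrix.diagonal (fun i => (hρ.1.eigenvalues i : ℂ)) * Uᴴ := by
    have := hρ.1.spectral_theorem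
    rw [Unitary.conjStarAlgAut_apply] at this
    exact this
  have hdiag : Uᴴ * ρ * U = Matrix.diagonal (fun i => (hρ.1.eigenvalues i : ℂ)) := by
    calc Uᴴ * ρ * U
        = (Uᴴ * U) * Matrix.diagonal (fun i => (hρ.1.eigenvalues i : ℂ)) * (Uᴴ * U) := by
          conv_lhs => rw [hspec]
          simp only [Matrix.mul_assoc]
      _ = _ := by rw [hU1, Matrix.one_mul, Matrix.mul_one]
  have hsum : ∑ i, hρ.1.eigenvalues i = 1 := by
    have := hρ.1.trace_eq_sum_eigenvalues
    rw [htr] at this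
    have h2 := congrArg Complex.re this.symm
    rw [Complex.re_sum] at h2
    exact h2
  constructor
  · intro h i
    refine ⟨hρ.eigenvalues_nonneg i, ?_⟩
    have h' := h.conj Uᴴ (by rw [Matrix.conjTranspose_conjTranspose]; exact hU2)
    rw [Matrix.conjTranspose_conjTranspose, hdiag] at h'
    exact h'.diag_le hsum i
  · intro h
    have h' := (fermiRep_diagonal (k := k) hsum (fun i => (h i).1) (fun i => (h i).2)).conj U hU1
    rw [← hspec] at h'
    exact h'
end
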